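/- arXiv:1411.1936 — 2 statements merged into one kernel-verified Lean document; each statement's English description precedes it below -/
import Mathlib

section
/- Let η ∈ S₀(ρ) be a Beppo Levi L₀-spline on ρ and let ψ ∈ Λ₀ satisfy ψ(r_j) = 0 for all j ∈ {1,…,n}. If, in addition, either lim_{r→0⁺} ψ(r) = 0, or η is non-singular, then ⟨η, ψ⟩₀ = 0. -/
open MeasureTheory Set Filter

noncomputable section

/-- The radial Beppo Levi energy space `Λ₀`: functions `f : (0,∞) → ℂ` of class `C¹`
whose derivative `f′` is locally absolutely continuous on compact subintervals of `(0,∞)`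
(encoded by the fundamental theorem of calculus with an integrable density `f″`),
and whose radial Beppo Levi energy `∫₀^∞ ( r·|f″(r)|² + (1/r)·|f′(r)|² ) dr` is finite. -/
structure Lambda0 where
  f : ℝ → ℂ
  f' : ℝ → ℂ
  f'' : ℝ → ℂ
  hasDeriv : ∀ r ∈ Set.Ioi (0:ℝ), HasDerivAt f (f' r) r
  contDeriv : ContinuousOn f' (Set.Ioi 0)
  locAC : ∀ a b : ℝ, 0 < a → a ≤ b →
    MeasureTheory.IntegrableOn f'' (Set.Icc a b) ∧
      ∀ x ∈ Set.Icc a b, f' x = f' a + ∫ t in a..x, f'' t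
  energyFin : MeasureTheory.IntegrableOn
    (fun r : ℝ => r * ‖f'' r‖ ^ 2 + (1 / r) * ‖f' r‖ ^ 2) (Set.Ioi 0)

/-- The squared radial Beppo Levi energy `‖·‖₀²` of a function with first derivative `g'`
and second derivative `g''`. -/
def energySq (g' g'' : ℝ → ℂ) : ℝ :=
  ∫ r in Set.Ioi (0:ℝ), (r * ‖g'' r‖ ^ 2 + (1 / r) * ‖g' r‖ ^ 2)

/-- The seminorm `‖f‖₀`. -/
def Lambda0.seminorm0 (F : Lambda0) : ℝ :=
  Real.sqrt (energySq F.f' F.f'')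

/-- The semi-inner product `⟨f,g⟩₀`. -/
def innerBL (F G : Lambda0) : ℂ :=
  ∫ r in Set.Ioi (0:ℝ),
    ((r : ℂ) * F.f'' r * (starRingEnd ℂ) (G.f'' r) +
      (1 / (r : ℂ)) * F.f' r * (starRingEnd ℂ) (G.f' r))

/-- A Beppo Levi `L₀`-spline on the positive knots `r 1 < r 2 < … < r n`:
piecewise of the form `a·x² + b·x²·ln x + c + d·ln x` between consecutive knots,
of the form `a·x² + b·x²·ln x + c` on `(0, r 1)`, of the form `c + d·ln x` on `(r n, ∞)`,
`C²` throughout `(0,∞)`, and continuously extended at `0`. -/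
structure IsBLSpline (n : ℕ) (r : ℕ → ℝ) (η : ℝ → ℂ) : Prop where
  pieces : ∀ j : ℕ, 1 ≤ j → j + 1 ≤ n → ∃ a b c d : ℂ,
    ∀ x ∈ Set.Ioo (r j) (r (j + 1)),
      η x = a * (x : ℂ) ^ 2 + b * (x : ℂ) ^ 2 * (Real.log x : ℂ) + c + d * (Real.log x : ℂ)
  left : ∃ a b c : ℂ, ∀ x ∈ Set.Ioo (0 : ℝ) (r 1),
      η x = a * (x : ℂ) ^ 2 + b * (x : ℂ) ^ 2 * (Real.log x : ℂ) + c
  right : ∃ c d : ℂ, ∀ x ∈ Set.Ioi (r n), η x = c + d * (Real.log x : ℂ)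
  smooth : ContDiffOn ℝ 2 η (Set.Ioi 0)
  cont0 : ContinuousWithinAt η (Set.Ici 0) 0

/-- A Beppo Levi `L₀`-spline is non-singular if on `(0, r₁)` it has the form `a·x² + c`. -/
def NonSingularBLS (r1 : ℝ) (η : ℝ → ℂ) : Prop :=
  ∃ a c : ℂ, ∀ x ∈ Set.Ioo (0 : ℝ) r1, η x = a * (x : ℂ) ^ 2 + c

/-- Rabut's kernel `K`. -/
def Kfun (r t : ℝ) : ℝ :=
  if r ≤ t then 0 else (1 / 4) * (t ^ 2 - r ^ 2 + (r ^ 2 + t ^ 2) * Real.log (r / t))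

/-- The limiting kernel `H_{0,∞}` (with left endpoint knot `r1`). -/
def Hfun (r1 r t : ℝ) : ℝ :=
  Kfun r t - Kfun r r1 - Kfun r1 t + (1 / 4) * (r ^ 2 - r1 ^ 2) * Real.log (t / r1)

/-- The basis function `φ₀`. -/
def phi0 (r : ℝ) : ℝ :=
  if r ≤ 1 then r ^ 2 - r ^ 2 * Real.log r else 1 + Real.log r

/-- Johnson's compactly supported profile `η₂`. -/
def eta2 (x : ℝ) : ℂ :=
  (((4 / 3 : ℝ) * (Real.log 2 - phi0 x + phi0 (x / 2)) : ℝ) : ℂ)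

/-- The non-singular compactly supported profile `β`. -/
def betaFn (x : ℝ) : ℂ :=
  (((1 / 5 : ℝ) * (27 * Real.log 3 - 32 * Real.log 2 + 5 * phi0 x
      - 32 * phi0 (x / 2) + 27 * phi0 (x / 3)) : ℝ) : ℂ)

/-- `Ker L₀ = span{r², r² ln r, 1, ln r}`, as functions on `(0,∞)`. -/
def KerL0 : Set (ℝ → ℂ) :=
  {η | ∃ a b c d : ℂ, ∀ x : ℝ, 0 < x →
    η x = a * (x : ℂ) ^ 2 + b * (x : ℂ) ^ 2 * (Real.log x : ℂ) + c + d * (Real.log x : ℂ)}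

/-- `α(h) = inf_{η ∈ Ker L₀} sup_{t ∈ [0,1]} |t^μ − η(1+th)|`. -/
def alphaFn (μ h : ℝ) : ℝ :=
  sInf {v : ℝ | ∃ η ∈ KerL0,
    v = sSup ((fun t : ℝ => ‖((t ^ μ : ℝ) : ℂ) - η (1 + t * h)‖) '' Set.Icc (0 : ℝ) 1)}

/-!
Put `W = r · η″ · conj ψ′`. A solution of `L₀ η = 0` satisfies the first integral
`(r η″)′ = η′ / r + 4 b`, where `b` is its coefficient of `r² ln r`, so on each piece of the spline
the integrand of `⟨η, ψ⟩₀` is the derivative of `W - 4 b conj ψ`. Since `ψ` vanishes at the knots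
and `W` is continuous across them, the integrals over the pieces telescope to the limits of `W`
at `∞` and at `0`; the term `b conj ψ` disappears at `∞` because `b = 0` there, and at `0` because
`ψ → 0` or `b = 0`. Both limits of `W` vanish: by Cauchy–Schwarz `W / r = η″ · conj ψ′` is
integrable on `(0, ∞)`, whereas `1 / r` is integrable neither near `0` nor near `∞`.
-/

open scoped ComplexConjugate

section AbsolutelyContinuous

theorem absolutelyContinuousOnInterval_conj {f : ℝ → ℂ} {a b : ℝ}
    (hf : AbsolutelyContinuousOnInterval f a b) :
    AbsolutelyContinuousOnInterval (fun x ↦ conj (f x)) a b := by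
  simpa only [absolutelyContinuousOnInterval_iff, Complex.dist_conj_conj] using hf

variable {E : Type*} [NormedAddCommGroup E] [NormedSpace ℝ E] {f f' : ℝ → E} {a b : ℝ}

theorem absolutelyContinuousOnInterval_of_eq_add_integral (hf' : IntervalIntegrable f' volume a b)
    (hf : ∀ x ∈ uIcc a b, f x = f a + ∫ t in a..x, f' t) :
    AbsolutelyContinuousOnInterval f a b := by
  have dist_le : ∀ x ∈ uIcc a b, ∀ y ∈ uIcc a b,
      dist (f x) (f y) ≤ dist (∫ t in a..x, ‖f' t‖) (∫ t in a..y, ‖f' t‖) := by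
    intro x hx y hy
    have hx' := hf'.mono_set (uIcc_subset_uIcc_left hx)
    have hy' := hf'.mono_set (uIcc_subset_uIcc_left hy)
    rw [hf x hx, hf y hy, dist_add_left, dist_eq_norm, Real.dist_eq,
      intervalIntegral.integral_interval_sub_left hx' hy',
      intervalIntegral.integral_interval_sub_left hx'.norm hy'.norm]
    exact intervalIntegral.norm_integral_le_abs_integral_norm
  have hac := hf'.norm.absolutelyContinuousOnInterval_intervalIntegral left_mem_uIcc
  rw [absolutelyContinuousOnInterval_iff] at hac ⊢
  intro ε hε
  obtain ⟨δ, hδ, h⟩ := hac ε hε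
  refine ⟨δ, hδ, fun I hI hlen ↦ (Finset.sum_le_sum fun i hi ↦ ?_).trans_lt (h I hI hlen)⟩
  exact dist_le _ (hI.1 i hi).1 _ (hI.1 i hi).2

variable [CompleteSpace E]

theorem absolutelyContinuousOnInterval_of_hasDerivAt_Ioo (hab : a ≤ b)
    (hf : ContinuousOn f (Icc a b)) (hderiv : ∀ x ∈ Ioo a b, HasDerivAt f (f' x) x)
    (hf' : IntervalIntegrable f' volume a b) : AbsolutelyContinuousOnInterval f a b := by
  refine absolutelyContinuousOnInterval_of_eq_add_integral hf' fun x hx ↦ ?_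
  have hxb : x ∈ Icc a b := uIcc_of_le hab ▸ hx
  rw [intervalIntegral.integral_eq_sub_of_hasDerivAt_of_le hxb.1
    (hf.mono (Icc_subset_Icc_right hxb.2)) (fun y hy ↦ hderiv y ⟨hy.1, hy.2.trans_le hxb.2⟩)
    (hf'.mono_set (uIcc_subset_uIcc_left hx)), add_sub_cancel]

theorem integral_eq_sub_of_absolutelyContinuousOnInterval
    (hf : AbsolutelyContinuousOnInterval f a b)
    (hderiv : ∀ᵐ x, x ∈ uIcc a b → HasDerivAt f (f' x) x)
    (hf' : IntervalIntegrable f' volume a b) : ∫ x in a..b, f' x = f b - f a := by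
  have hprim : AbsolutelyContinuousOnInterval (fun x ↦ ∫ t in a..x, f' t) a b :=
    absolutelyContinuousOnInterval_of_eq_add_integral hf' fun x _ ↦ by simp
  have hzero : ∀ᵐ x, x ∈ uIcc a b → HasDerivAt (f - fun x ↦ ∫ t in a..x, f' t) 0 x := by
    filter_upwards [hderiv, hf'.ae_hasDerivAt_integral] with x hx hint hmem
    simpa only [sub_self] using (hx hmem).sub (hint hmem a left_mem_uIcc)
  obtain ⟨C, hC⟩ := (hf.sub hprim).const_of_ae_hasDerivAt_zero hzero
  have hconst := (hC a left_mem_uIcc).trans (hC b right_mem_uIcc).symm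
  simp only [Pi.sub_apply, intervalIntegral.integral_same, sub_zero] at hconst
  rw [hconst, sub_sub_cancel]

end AbsolutelyContinuous

section LogarithmicDivergence

theorem eq_zero_of_tendsto_of_integrableAtFilter_smul {α E : Type*} [MeasurableSpace α]
    {μ : Measure α} {l : Filter α} [l.IsMeasurablyGenerated] [NormedAddCommGroup E]
    [NormedSpace ℝ E] {u : α → ℝ} {w : α → E} {c : E} (hu : StronglyMeasurableAtFilter u l μ)
    (hnot : ¬ IntegrableAtFilter u l μ) (hint : IntegrableAtFilter (fun x ↦ u x • w x) l μ)
    (hw : Tendsto w l (nhds c)) : c = 0 := by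
  by_contra hc
  have one_isBigO : (fun _ ↦ (1 : ℝ)) =O[l] w :=
    (Asymptotics.isBigO_const_left_iff_pos_le_norm one_ne_zero).2
      ⟨‖c‖ / 2, half_pos (norm_pos_iff.2 hc),
        hw.norm.eventually (Ici_mem_nhds (half_lt_self (norm_pos_iff.2 hc)))⟩
  have u_isBigO : u =O[l] fun x ↦ u x • w x := by
    simpa only [smul_eq_mul, mul_one] using (Asymptotics.isBigO_refl u l).smul one_isBigO
  exact hnot (u_isBigO.integrableAtFilter hu hint)

theorem not_integrableAtFilter_inv_atTop : ¬ IntegrableAtFilter (fun x : ℝ ↦ x⁻¹) atTop := by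
  rintro ⟨s, hs, hint⟩
  obtain ⟨a, ha⟩ := mem_atTop_sets.1 hs
  exact not_integrableOn_Ici_inv (hint.mono_set ha)

theorem not_integrableAtFilter_inv_nhdsGT_zero :
    ¬ IntegrableAtFilter (fun x : ℝ ↦ x⁻¹) (nhdsWithin 0 (Ioi 0)) := by
  rintro ⟨s, hs, hint⟩
  obtain ⟨δ, hδ, hsub⟩ := mem_nhdsGT_iff_exists_Ioc_subset.1 hs
  have hδ' := (intervalIntegrable_iff_integrableOn_Ioc_of_le (le_of_lt hδ)).2 (hint.mono_set hsub)
  rcases intervalIntegrable_inv_iff.1 hδ' with h | h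
  · exact hδ.ne h
  · exact h left_mem_uIcc

end LogarithmicDivergence

section KernelOfL0

variable (a b c d : ℂ) {x : ℝ}

theorem hasDerivAt_ofReal_log (hx : x ≠ 0) :
    HasDerivAt (fun t : ℝ ↦ (Real.log t : ℂ)) (x : ℂ)⁻¹ x := by
  simpa only [Complex.ofReal_inv] using (Real.hasDerivAt_log hx).ofReal_comp

theorem hasDerivAt_kerL0 (hx : x ≠ 0) :
    HasDerivAt (fun t : ℝ ↦ a * (t : ℂ) ^ 2 + b * (t : ℂ) ^ 2 * (Real.log t : ℂ) + c
      + d * (Real.log t : ℂ)) (2 * a * x + b * (2 * x * Real.log x + x) + d / x) x := by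
  have hx0 : (x : ℂ) ≠ 0 := Complex.ofReal_ne_zero.2 hx
  have hlog := hasDerivAt_ofReal_log hx
  have hsq := (hasDerivAt_id x).ofReal_comp.pow 2
  refine ((((hsq.const_mul a).add ((hsq.const_mul b).mul hlog)).add_const c).add
    (hlog.const_mul d)).congr_deriv ?_
  simp only [Nat.cast_ofNat, id_eq, Nat.add_one_sub_one, pow_one, Complex.ofReal_one, mul_one,
    Pi.pow_apply]
  field_simp

theorem hasDerivAt_deriv_kerL0 (hx : x ≠ 0) :
    HasDerivAt (fun t : ℝ ↦ 2 * a * (t : ℂ) + b * (2 * t * Real.log t + t) + d / t)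
      (2 * a + b * (2 * Real.log x + 3) - d / (x : ℂ) ^ 2) x := by
  have hx0 : (x : ℂ) ≠ 0 := Complex.ofReal_ne_zero.2 hx
  have hid := (hasDerivAt_id x).ofReal_comp
  refine (((hid.const_mul (2 * a)).add
    ((((hid.const_mul 2).mul (hasDerivAt_ofReal_log hx)).add hid).const_mul b)).add
    ((hid.inv hx0).const_mul d)).congr_deriv ?_
  simp only [Complex.ofReal_one, mul_one, id_eq]
  field_simp
  ring

theorem hasDerivAt_mul_deriv_deriv_kerL0 (hx : x ≠ 0) :
    HasDerivAt (fun t : ℝ ↦ (t : ℂ) * (2 * a + b * (2 * Real.log t + 3) - d / (t : ℂ) ^ 2))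
      ((2 * a * x + b * (2 * x * Real.log x + x) + d / x) / x + 4 * b) x := by
  have hx0 : (x : ℂ) ≠ 0 := Complex.ofReal_ne_zero.2 hx
  have hid := (hasDerivAt_id x).ofReal_comp
  refine (hid.mul ((((((hasDerivAt_ofReal_log hx).const_mul 2).add_const 3).const_mul b).const_add
    (2 * a)).sub (((hid.pow 2).inv (pow_ne_zero 2 hx0)).const_mul d))).congr_deriv ?_
  simp only [Complex.ofReal_one, id_eq, Pi.inv_apply, Pi.pow_apply, Pi.sub_apply, one_mul,
    Nat.cast_ofNat, Nat.add_one_sub_one, pow_one, mul_one]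
  field_simp
  ring

end KernelOfL0

namespace Lambda0

variable (F G : Lambda0)

section Regularity

theorem intervalIntegrable_f'' {a b : ℝ} (ha : 0 < a) (hab : a ≤ b) :
    IntervalIntegrable F.f'' volume a b :=
  (intervalIntegrable_iff_integrableOn_Icc_of_le hab).2 (F.locAC a b ha hab).1

theorem aestronglyMeasurable_f'' : AEStronglyMeasurable F.f'' (volume.restrict (Ioi 0)) := by
  refine LocallyIntegrableOn.aestronglyMeasurable fun x hx ↦ ?_
  have hx' : x / 2 < x := half_lt_self hx
  exact ⟨Icc (x / 2) (x + 1), mem_nhdsWithin_of_mem_nhds (Icc_mem_nhds hx' (lt_add_one x)),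
    (F.locAC _ _ (half_pos hx) (by linarith)).1⟩

theorem aestronglyMeasurable_f' : AEStronglyMeasurable F.f' (volume.restrict (Ioi 0)) :=
  F.contDeriv.aestronglyMeasurable measurableSet_Ioi

theorem ae_hasDerivAt_f' : ∀ᵐ x ∂volume.restrict (Ioi 0), HasDerivAt F.f' (F.f'' x) x := by
  refine ae_restrict_of_ae_restrict_inter_Ioo fun a b ha _ hab ↦ ?_
  have hpos : Ioo a b ⊆ Ioi 0 := fun x hx ↦ (mem_Ioi.1 ha).trans hx.1
  rw [inter_eq_right.2 hpos, ae_restrict_iff' measurableSet_Ioo]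
  filter_upwards [(F.intervalIntegrable_f'' ha hab.le).ae_hasDerivAt_integral] with x hderiv hx
  refine ((hderiv (uIcc_of_le hab.le ▸ Ioo_subset_Icc_self hx) a left_mem_uIcc).const_add
    (F.f' a)).congr_of_eventuallyEq ?_
  filter_upwards [Ioo_mem_nhds hx.1 hx.2] with y hy
  exact (F.locAC a b ha hab.le).2 y (Ioo_subset_Icc_self hy)

theorem continuousOn_deriv_f' (hF : ContDiffOn ℝ 2 F.f (Ioi 0)) :
    ContinuousOn (deriv F.f') (Ioi 0) := by
  have deriv_contDiffOn : ContDiffOn ℝ 1 (deriv F.f) (Ioi 0) :=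
    hF.deriv_of_isOpen isOpen_Ioi (by norm_num)
  have f'_contDiffOn : ContDiffOn ℝ 1 F.f' (Ioi 0) :=
    deriv_contDiffOn.congr fun x hx ↦ (F.hasDeriv x hx).deriv.symm
  exact f'_contDiffOn.continuousOn_deriv_of_isOpen isOpen_Ioi le_rfl

theorem continuousOn_mul_deriv_f' (hF : ContDiffOn ℝ 2 F.f (Ioi 0)) :
    ContinuousOn (fun x : ℝ ↦ (x : ℂ) * deriv F.f' x) (Ioi 0) :=
  Complex.continuous_ofReal.continuousOn.mul (F.continuousOn_deriv_f' hF)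

variable {a b : ℝ}

theorem absolutelyContinuousOnInterval_f (ha : 0 < a) (hab : a ≤ b) :
    AbsolutelyContinuousOnInterval F.f a b := by
  have hpos : Icc a b ⊆ Ioi 0 := fun x hx ↦ ha.trans_le hx.1
  exact absolutelyContinuousOnInterval_of_hasDerivAt_Ioo hab
    (fun x hx ↦ (F.hasDeriv x (hpos hx)).continuousAt.continuousWithinAt)
    (fun x hx ↦ F.hasDeriv x (hpos (Ioo_subset_Icc_self hx)))
    ((F.contDeriv.mono hpos).intervalIntegrable_of_Icc hab)

theorem absolutelyContinuousOnInterval_f' (ha : 0 < a) (hab : a ≤ b) :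
    AbsolutelyContinuousOnInterval F.f' a b :=
  absolutelyContinuousOnInterval_of_eq_add_integral (F.intervalIntegrable_f'' ha hab)
    (uIcc_of_le hab ▸ (F.locAC a b ha hab).2)

end Regularity

section Integrability

theorem memLp_sqrt_smul_f'' :
    MemLp (fun x ↦ √x • F.f'' x) 2 (volume.restrict (Ioi 0)) := by
  have hmeas : AEStronglyMeasurable (fun x ↦ √x • F.f'' x) (volume.restrict (Ioi 0)) :=
    Real.continuous_sqrt.aestronglyMeasurable.smul F.aestronglyMeasurable_f''
  refine (memLp_two_iff_integrable_sq_norm hmeas).2 (F.energyFin.mono' (hmeas.norm.pow 2) ?_)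
  filter_upwards [self_mem_ae_restrict measurableSet_Ioi] with x hx
  have hx0 : 0 < x := hx
  rw [norm_smul, mul_pow, Real.norm_of_nonneg (Real.sqrt_nonneg x), Real.sq_sqrt hx0.le,
    Real.norm_of_nonneg (by positivity)]
  exact le_add_of_nonneg_right (by positivity)

theorem memLp_inv_sqrt_smul_f' :
    MemLp (fun x ↦ (√x)⁻¹ • F.f' x) 2 (volume.restrict (Ioi 0)) := by
  have hmeas : AEStronglyMeasurable (fun x ↦ (√x)⁻¹ • F.f' x) (volume.restrict (Ioi 0)) :=
    Real.continuous_sqrt.measurable.inv.aestronglyMeasurable.smul F.aestronglyMeasurable_f'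
  refine (memLp_two_iff_integrable_sq_norm hmeas).2 (F.energyFin.mono' (hmeas.norm.pow 2) ?_)
  filter_upwards [self_mem_ae_restrict measurableSet_Ioi] with x hx
  have hx0 : 0 < x := hx
  rw [norm_smul, mul_pow, norm_inv, Real.norm_of_nonneg (Real.sqrt_nonneg x), inv_pow,
    Real.sq_sqrt hx0.le, Real.norm_of_nonneg (by positivity), one_div]
  exact le_add_of_nonneg_left (by positivity)

/-- The integrand of the semi-inner product `innerBL F G`. -/
def innerIntegrand (x : ℝ) : ℂ :=
  x * F.f'' x * conj (G.f'' x) + 1 / (x : ℂ) * F.f' x * conj (G.f' x)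

theorem integrableOn_innerIntegrand : IntegrableOn (innerIntegrand F G) (Ioi 0) := by
  have h'' := F.memLp_sqrt_smul_f''.integrable_mul G.memLp_sqrt_smul_f''.star
  have h' := F.memLp_inv_sqrt_smul_f'.integrable_mul G.memLp_inv_sqrt_smul_f'.star
  refine (h''.add h').congr ?_
  filter_upwards [self_mem_ae_restrict measurableSet_Ioi] with x hx
  have hsqrt : (x : ℂ) = √x * √x := by
    rw [← Complex.ofReal_mul, Real.mul_self_sqrt (le_of_lt hx)]
  simp only [innerIntegrand, hsqrt, Pi.add_apply, Pi.mul_apply, Pi.star_apply,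
    Complex.real_smul, Complex.ofReal_inv, RCLike.star_def, map_mul, map_inv₀, Complex.conj_ofReal]
  ring

theorem integrableOn_f''_mul_conj_f' :
    IntegrableOn (fun x ↦ F.f'' x * conj (G.f' x)) (Ioi 0) := by
  refine (F.memLp_sqrt_smul_f''.integrable_mul G.memLp_inv_sqrt_smul_f'.star).congr ?_
  filter_upwards [self_mem_ae_restrict measurableSet_Ioi] with x hx
  have hsqrt : (√x : ℂ) ≠ 0 := Complex.ofReal_ne_zero.2 (Real.sqrt_ne_zero'.2 hx)
  simp only [Complex.real_smul, Complex.ofReal_inv, Pi.mul_apply, Pi.star_apply, star_mul',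
    star_inv₀, RCLike.star_def, Complex.conj_ofReal]
  field_simp

theorem intervalIntegrable_innerIntegrand {a b : ℝ} (ha : 0 ≤ a) (hb : 0 ≤ b) :
    IntervalIntegrable (innerIntegrand F G) volume a b :=
  intervalIntegrable_iff.2 <|
    (integrableOn_innerIntegrand F G).mono_set fun _ hx ↦ (le_min ha hb).trans_lt hx.1

end Integrability

section BoundaryTerm

/-- The boundary term `r · f″(r) · conj g′(r)` of the integration by parts for `innerBL F G`.
The second derivative is taken pointwise, as `F.f''` is only determined almost everywhere. -/
def boundaryTerm (x : ℝ) : ℂ :=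
  x * deriv F.f' x * conj (G.f' x)

theorem integrableOn_inv_smul_boundaryTerm :
    IntegrableOn (fun x ↦ x⁻¹ • boundaryTerm F G x) (Ioi 0) := by
  refine (integrableOn_f''_mul_conj_f' F G).congr ?_
  filter_upwards [F.ae_hasDerivAt_f', self_mem_ae_restrict measurableSet_Ioi] with x hderiv hx
  have hx0 : (x : ℂ) ≠ 0 := Complex.ofReal_ne_zero.2 (ne_of_gt hx)
  rw [boundaryTerm, hderiv.deriv, Complex.real_smul, Complex.ofReal_inv]
  field_simp

variable {F G}

theorem eq_zero_of_tendsto_boundaryTerm {l : Filter ℝ} [l.IsMeasurablyGenerated] {c : ℂ}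
    (hl : Ioi 0 ∈ l) (hinv : ¬ IntegrableAtFilter (fun x : ℝ ↦ x⁻¹) l)
    (h : Tendsto (boundaryTerm F G) l (nhds c)) : c = 0 :=
  eq_zero_of_tendsto_of_integrableAtFilter_smul
    ⟨univ, univ_mem, measurable_inv.aestronglyMeasurable⟩ hinv
    ⟨Ioi 0, hl, integrableOn_inv_smul_boundaryTerm F G⟩ h

end BoundaryTerm

/-- `F` solves `r·f‴ + f″ − f′/r = 4b` on `U`, that is, `F` is a solution on `U` of the
Euler-Lagrange equation `L₀ f = 0` of the energy whose coefficient of `r² ln r` is `b`. -/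
def SolvesL0On (F : Lambda0) (b : ℂ) (U : Set ℝ) : Prop :=
  ∀ x ∈ U, HasDerivAt (fun t : ℝ ↦ (t : ℂ) * deriv F.f' t) (F.f' x / x + 4 * b) x

variable {F G}

theorem SolvesL0On.mono {b : ℂ} {U V : Set ℝ} (h : F.SolvesL0On b V) (hUV : U ⊆ V) :
    F.SolvesL0On b U :=
  fun x hx ↦ h x (hUV hx)

theorem solvesL0On_of_eqOn {a b c d : ℂ} {U : Set ℝ} (hU : IsOpen U) (hpos : U ⊆ Ioi 0)
    (h : ∀ x ∈ U, F.f x = a * (x : ℂ) ^ 2 + b * (x : ℂ) ^ 2 * (Real.log x : ℂ) + c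
      + d * (Real.log x : ℂ)) : F.SolvesL0On b U := by
  have f'_eq : ∀ x ∈ U, F.f' x = 2 * a * x + b * (2 * x * Real.log x + x) + d / x := fun x hx ↦
    (F.hasDeriv x (hpos hx)).unique <|
      (hasDerivAt_kerL0 a b c d (ne_of_gt (hpos hx))).congr_of_eventuallyEq <|
        mem_of_superset (hU.mem_nhds hx) h
  have deriv_f'_eq : ∀ x ∈ U,
      deriv F.f' x = 2 * a + b * (2 * Real.log x + 3) - d / (x : ℂ) ^ 2 := fun x hx ↦
    ((hasDerivAt_deriv_kerL0 a b d (ne_of_gt (hpos hx))).congr_of_eventuallyEq <|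
      mem_of_superset (hU.mem_nhds hx) f'_eq).deriv
  intro x hx
  rw [f'_eq x hx]
  refine (hasDerivAt_mul_deriv_deriv_kerL0 a b d (ne_of_gt (hpos hx))).congr_of_eventuallyEq ?_
  filter_upwards [hU.mem_nhds hx] with y hy
  rw [deriv_f'_eq y hy]

variable {a b : ℝ} {k : ℂ}

theorem SolvesL0On.absolutelyContinuousOnInterval (hF : ContDiffOn ℝ 2 F.f (Ioi 0))
    (h : F.SolvesL0On k (Ioo a b)) (ha : 0 < a) (hab : a ≤ b) :
    AbsolutelyContinuousOnInterval (fun x : ℝ ↦ (x : ℂ) * deriv F.f' x) a b := by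
  have hpos : Icc a b ⊆ Ioi 0 := fun x hx ↦ ha.trans_le hx.1
  refine absolutelyContinuousOnInterval_of_hasDerivAt_Ioo hab
    ((F.continuousOn_mul_deriv_f' hF).mono hpos) h (ContinuousOn.intervalIntegrable_of_Icc hab ?_)
  exact ((F.contDeriv.mono hpos).div Complex.continuous_ofReal.continuousOn
    fun x hx ↦ Complex.ofReal_ne_zero.2 (ne_of_gt (hpos hx))).add continuousOn_const

theorem SolvesL0On.integral_innerIntegrand (hF : ContDiffOn ℝ 2 F.f (Ioi 0))
    (h : F.SolvesL0On k (Ioo a b)) (ha : 0 < a) (hab : a ≤ b) :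
    ∫ x in a..b, innerIntegrand F G x =
      boundaryTerm F G b - boundaryTerm F G a - 4 * k * (conj (G.f b) - conj (G.f a)) := by
  have hac : AbsolutelyContinuousOnInterval
      (fun x ↦ boundaryTerm F G x - 4 * k * conj (G.f x)) a b :=
    ((h.absolutelyContinuousOnInterval hF ha hab).smul (absolutelyContinuousOnInterval_conj
      (G.absolutelyContinuousOnInterval_f' ha hab))).sub
      ((absolutelyContinuousOnInterval_conj
        (G.absolutelyContinuousOnInterval_f ha hab)).const_smul (4 * k))
  have hderiv : ∀ᵐ x, x ∈ uIcc a b → HasDerivAt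
      (fun x ↦ boundaryTerm F G x - 4 * k * conj (G.f x)) (innerIntegrand F G x) x := by
    have hF' := (ae_restrict_iff' measurableSet_Ioi).1 F.ae_hasDerivAt_f'
    have hG' := (ae_restrict_iff' measurableSet_Ioi).1 G.ae_hasDerivAt_f'
    filter_upwards [hF', hG', volume.ae_ne a, volume.ae_ne b] with x hFx hGx hxa hxb hx
    rw [uIcc_of_le hab] at hx
    have hx0 : 0 < x := ha.trans_le hx.1
    have hx' : x ∈ Ioo a b := ⟨hx.1.lt_of_ne' hxa, hx.2.lt_of_ne hxb⟩
    refine (((h x hx').mul (hGx hx0).star).sub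
      ((G.hasDeriv x hx0).star.const_mul (4 * k))).congr_deriv ?_
    rw [(hFx hx0).deriv, innerIntegrand]
    simp only [RCLike.star_def]
    ring
  rw [integral_eq_sub_of_absolutelyContinuousOnInterval hac hderiv
    (intervalIntegrable_innerIntegrand F G ha.le (ha.le.trans hab))]
  ring

theorem SolvesL0On.integral_innerIntegrand_zero (hF : ContDiffOn ℝ 2 F.f (Ioi 0))
    (h : F.SolvesL0On k (Ioo 0 b)) (hb : 0 < b)
    (hG : Tendsto (fun x ↦ k * conj (G.f x)) (nhdsWithin 0 (Ioi 0)) (nhds 0)) :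
    ∫ x in 0..b, innerIntegrand F G x = boundaryTerm F G b - 4 * k * conj (G.f b) := by
  have hint : Tendsto (fun x ↦ ∫ t in x..b, innerIntegrand F G t) (nhdsWithin 0 (Ioi 0))
      (nhds (∫ t in 0..b, innerIntegrand F G t)) := by
    have hcont := intervalIntegral.continuousOn_primitive_interval_left (b := b)
      ((intervalIntegrable_iff' (by simp)).1
        (intervalIntegrable_innerIntegrand F G le_rfl hb.le)) 0 left_mem_uIcc
    refine hcont.tendsto.mono_left ?_
    rw [uIcc_of_le hb.le, ← nhdsWithin_Ioc_eq_nhdsGT hb]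
    exact nhdsWithin_mono _ Ioc_subset_Icc_self
  have hlim : Tendsto (boundaryTerm F G) (nhdsWithin 0 (Ioi 0))
      (nhds (boundaryTerm F G b - 4 * k * conj (G.f b) -
        ∫ x in 0..b, innerIntegrand F G x)) := by
    have hdiff := (hint.const_sub (boundaryTerm F G b - 4 * k * conj (G.f b))).add (hG.const_mul 4)
    rw [mul_zero, add_zero] at hdiff
    refine hdiff.congr' ?_
    filter_upwards [Ioo_mem_nhdsGT hb] with x hx
    rw [(h.mono (Ioo_subset_Ioo_left hx.1.le)).integral_innerIntegrand hF hx.1 hx.2.le]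
    ring
  exact (sub_eq_zero.1 (eq_zero_of_tendsto_boundaryTerm self_mem_nhdsWithin
    not_integrableAtFilter_inv_nhdsGT_zero hlim)).symm

theorem SolvesL0On.integral_Ioi_innerIntegrand (hF : ContDiffOn ℝ 2 F.f (Ioi 0))
    (h : F.SolvesL0On 0 (Ioi a)) (ha : 0 < a) :
    ∫ x in Ioi a, innerIntegrand F G x = -boundaryTerm F G a := by
  have hint := intervalIntegral_tendsto_integral_Ioi a
    ((integrableOn_innerIntegrand F G).mono_set (Ioi_subset_Ioi ha.le)) tendsto_id
  have hlim : Tendsto (boundaryTerm F G) atTop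
      (nhds ((∫ x in Ioi a, innerIntegrand F G x) + boundaryTerm F G a)) := by
    refine (hint.add_const _).congr' ?_
    filter_upwards [eventually_ge_atTop a] with x hx
    rw [id, (h.mono Ioo_subset_Ioi_self).integral_innerIntegrand hF ha hx]
    ring
  exact eq_neg_of_add_eq_zero_left (eq_zero_of_tendsto_boundaryTerm (Ioi_mem_atTop 0)
    not_integrableAtFilter_inv_atTop hlim)

end Lambda0

theorem knot_pos {α : Type*} [Preorder α] [Zero α] {n : ℕ} {r : ℕ → α} (hpos : 0 < r 1)
    (hmono : ∀ j, 1 ≤ j → j < n → r j < r (j + 1)) {j : ℕ} (hj : 1 ≤ j) (hjn : j ≤ n) :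
    0 < r j := by
  induction j, hj using Nat.le_induction with
  | base => exact hpos
  | succ j hj ih => exact (ih (by lia)).trans (hmono j hj hjn)

namespace IsBLSpline

open Lambda0

variable {n : ℕ} {r : ℕ → ℝ} {E P : Lambda0}

theorem integral_innerIntegrand_first_last (hE : IsBLSpline n r E.f) (hn : 1 ≤ n) (hpos : 0 < r 1)
    (hmono : ∀ j, 1 ≤ j → j < n → r j < r (j + 1)) (hzero : ∀ j, 1 ≤ j → j ≤ n → P.f (r j) = 0) :
    ∫ x in r 1..r n, innerIntegrand E P x = boundaryTerm E P (r n) - boundaryTerm E P (r 1) := by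
  have r_pos {j : ℕ} (hj : 1 ≤ j) (hjn : j ≤ n) : 0 < r j := knot_pos hpos hmono hj hjn
  have integral_piece : ∀ j ∈ Finset.Ico 1 n, ∫ x in r j..r (j + 1), innerIntegrand E P x =
      boundaryTerm E P (r (j + 1)) - boundaryTerm E P (r j) := by
    intro j hj
    obtain ⟨hj, hjn⟩ := Finset.mem_Ico.1 hj
    obtain ⟨a, b, c, d, hpiece⟩ := hE.pieces j hj hjn
    have hrj := r_pos hj hjn.le
    have hsolves : E.SolvesL0On b (Ioo (r j) (r (j + 1))) :=
      solvesL0On_of_eqOn isOpen_Ioo (fun x hx ↦ hrj.trans hx.1) hpiece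
    rw [hsolves.integral_innerIntegrand hE.smooth hrj (hmono j hj hjn).le, hzero j hj hjn.le,
      hzero (j + 1) (by lia) hjn]
    simp only [sub_self, mul_zero, sub_zero]
  rw [← intervalIntegral.sum_integral_adjacent_intervals_Ico hn fun j hj ↦
      intervalIntegrable_innerIntegrand E P (r_pos hj.1 hj.2.le).le
        (r_pos (by lia) hj.2).le,
    Finset.sum_congr rfl integral_piece, Finset.sum_Ico_sub (fun j ↦ boundaryTerm E P (r j)) hn]

theorem integral_innerIntegrand_zero_first (hE : IsBLSpline n r E.f) (hpos : 0 < r 1)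
    (hP : P.f (r 1) = 0)
    (hextra : Tendsto P.f (nhdsWithin 0 (Ioi 0)) (nhds 0) ∨ NonSingularBLS (r 1) E.f) :
    ∫ x in 0..r 1, innerIntegrand E P x = boundaryTerm E P (r 1) := by
  obtain ⟨b, hsolves, hlim⟩ : ∃ b, E.SolvesL0On b (Ioo 0 (r 1)) ∧
      Tendsto (fun x ↦ b * conj (P.f x)) (nhdsWithin 0 (Ioi 0)) (nhds 0) := by
    rcases hextra with hlim | ⟨a, c, hleft⟩
    · obtain ⟨a, b, c, hleft⟩ := hE.left
      refine ⟨b, solvesL0On_of_eqOn (a := a) (c := c) (d := 0) isOpen_Ioo (fun _ hx ↦ hx.1)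
        fun x hx ↦ ?_, ?_⟩
      · rw [hleft x hx, zero_mul, add_zero]
      · simpa using (hlim.star).const_mul b
    · refine ⟨0, solvesL0On_of_eqOn (a := a) (c := c) (d := 0) isOpen_Ioo (fun _ hx ↦ hx.1)
        fun x hx ↦ ?_, ?_⟩
      · rw [hleft x hx]
        ring
      · simp
  rw [hsolves.integral_innerIntegrand_zero hE.smooth hpos hlim, hP, map_zero, mul_zero, sub_zero]

theorem integral_innerIntegrand_Ioi_last (hE : IsBLSpline n r E.f) (hrn : 0 < r n) :
    ∫ x in Ioi (r n), innerIntegrand E P x = -boundaryTerm E P (r n) := by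
  obtain ⟨c, d, hright⟩ := hE.right
  have hsolves : E.SolvesL0On 0 (Ioi (r n)) :=
    solvesL0On_of_eqOn (a := 0) (c := c) (d := d) isOpen_Ioi (Ioi_subset_Ioi hrn.le) fun x hx ↦ by
      rw [hright x hx]
      ring
  exact hsolves.integral_Ioi_innerIntegrand hE.smooth hrn

end IsBLSpline

/-- fundamental orthogonality. If `η ∈ S₀(ρ)` and `ψ ∈ Λ₀` vanishes at all
knots, and either `lim_{r→0⁺} ψ(r) = 0` or `η` is non-singular, then `⟨η,ψ⟩₀ = 0`. -/
theorem stmt2 (n : ℕ) (r : ℕ → ℝ) (hn : 1 ≤ n) (hpos : 0 < r 1)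
    (hmono : ∀ j, 1 ≤ j → j < n → r j < r (j + 1))
    (E P : Lambda0) (hE : IsBLSpline n r E.f)
    (hzero : ∀ j, 1 ≤ j → j ≤ n → P.f (r j) = 0)
    (hextra : Filter.Tendsto P.f (nhdsWithin 0 (Set.Ioi 0)) (nhds 0) ∨
      NonSingularBLS (r 1) E.f) :
    innerBL E P = 0 := by
  have hrn : 0 < r n := knot_pos hpos hmono hn le_rfl
  have hint := Lambda0.integrableOn_innerIntegrand E P
  calc innerBL E P
      = ∫ x in Ioi 0, E.innerIntegrand P x := rfl
    _ = (∫ x in 0..r 1, E.innerIntegrand P x) + (∫ x in r 1..r n, E.innerIntegrand P x) +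
          ∫ x in Ioi (r n), E.innerIntegrand P x := by
        rw [intervalIntegral.integral_add_adjacent_intervals
            (Lambda0.intervalIntegrable_innerIntegrand E P le_rfl hpos.le)
            (Lambda0.intervalIntegrable_innerIntegrand E P hpos.le hrn.le),
          intervalIntegral.integral_interval_add_Ioi hint
            (hint.mono_set (Ioi_subset_Ioi hrn.le))]
    _ = E.boundaryTerm P (r 1) + (E.boundaryTerm P (r n) - E.boundaryTerm P (r 1)) +
          -E.boundaryTerm P (r n) := by
        rw [hE.integral_innerIntegrand_zero_first hpos (hzero 1 le_rfl hn) hextra,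
          hE.integral_innerIntegrand_first_last hn hpos hmono hzero,
          hE.integral_innerIntegrand_Ioi_last hrn]
    _ = 0 := by ring
end
end

section
/- Let n ≥ 2 and let 0 < r₁ < r₂ < … < r_n. Then the (n−1)×(n−1) matrix with entries H_{0,∞}(r_k, r_j), for k, j ∈ {2,…,n}, is invertible. -/
open MeasureTheory Set Filter

noncomputable section

/-!
Substituting `K` into `H_{0,∞}` one finds
`H_{0,∞}(s, t) = G(s, t) - G(s, r₁) - G(r₁, t) + G(r₁, r₁)`, where
`G(s, t) = K(s, t) + (s² / 4) (1 + ln (t / s)) = ∫₀^∞ x · ln⁺(s / x) · ln⁺(t / x) dx`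
is the inner product in `L²(0, ∞)` of the functions `φ_s(x) = √x · ln⁺(s / x)` and `φ_t`.
So the matrix is the Gram matrix of the vectors `φ_{r_k} - φ_{r₁}`. These are linearly independent
because the `φ_s` are: `φ_s` has a kink at `s`, where every other `φ_t` is differentiable.
-/

section LinearIndependence

variable {ι : Type*}

theorem linearIndependent_domRestrict_of_not_differentiableAt {E : Type*} [NormedAddCommGroup E]
    [NormedSpace ℝ E] {U : Set E} (hU : IsOpen U) {f : ι → E → ℝ} {p : ι → E}
    (hpU : ∀ i, p i ∈ U) (hself : ∀ i, ¬ DifferentiableAt ℝ (f i) (p i))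
    (hother : ∀ i j, j ≠ i → DifferentiableAt ℝ (f j) (p i)) :
    LinearIndependent ℝ fun i => U.domRestrict (f i) := by
  classical
  refine linearIndependent_iff'.2 fun S c hsum i hi => by_contra fun hci => hself i ?_
  have hsolve : f i =ᶠ[nhds (p i)] fun x => -(c i)⁻¹ * ∑ j ∈ S.erase i, c j * f j x := by
    filter_upwards [hU.mem_nhds (hpU i)] with x hx
    have hx0 : ∑ j ∈ S, c j * f j x = 0 := by
      simpa [Set.domRestrict_apply] using congrFun hsum ⟨x, hx⟩
    rw [← Finset.add_sum_erase _ _ hi] at hx0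
    rw [eq_neg_of_add_eq_zero_right hx0]
    field_simp
  refine DifferentiableAt.congr_of_eventuallyEq (.const_mul (.fun_sum fun j hj => ?_) _) hsolve
  exact (hother i j (Finset.ne_of_mem_erase hj)).const_mul _

theorem linearIndependent_toLp_of_domRestrict {X : Type*} [TopologicalSpace X] [MeasurableSpace X]
    {μ : Measure X} [μ.IsOpenPosMeasure] {U : Set X} (hU : IsOpen U) {p : ENNReal}
    {f : ι → X → ℝ} (hcont : ∀ i, ContinuousOn (f i) U)
    (hf : ∀ i, MemLp (f i) p (μ.restrict U))
    (hindep : LinearIndependent ℝ fun i => U.domRestrict (f i)) :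
    LinearIndependent ℝ fun i => (hf i).toLp := by
  refine linearIndependent_iff'.2 fun S c hsum => linearIndependent_iff'.1 hindep S c ?_
  have hae : (fun x => ∑ i ∈ S, c i * f i x) =ᵐ[μ.restrict U] fun _ => 0 := by
    have hsmul : ∀ᵐ x ∂μ.restrict U, ∀ i ∈ S, (c i • (hf i).toLp) x = c i * f i x :=
      (Finset.eventually_all S).2 fun i _ => by
        filter_upwards [Lp.coeFn_smul (c i) (hf i).toLp, (hf i).coeFn_toLp] with x hsmul hfx
        rw [hsmul, Pi.smul_apply, hfx, smul_eq_mul]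
    filter_upwards [Lp.coeFn_fun_finsetSum S fun i => c i • (hf i).toLp, hsmul,
      Lp.coeFn_zero ℝ p (μ.restrict U)] with x hx hterm hzero
    rw [← Finset.sum_congr rfl hterm, ← hx, hsum, hzero, Pi.zero_apply]
  have heq : EqOn (fun x => ∑ i ∈ S, c i * f i x) (fun _ => 0) U :=
    Measure.eqOn_open_of_ae_eq hae hU
      (continuousOn_finsetSum S fun i _ => (hcont i).const_mul _) continuousOn_const
  ext x
  simpa [Set.domRestrict_apply] using heq x.2

end LinearIndependence

section LogRamp

open Real
open scoped InnerProductSpace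

variable {s t x : ℝ}

theorem differentiableAt_posLog (hx : x ≠ 0) (hlog : log x ≠ 0) : DifferentiableAt ℝ posLog x := by
  have hhalf : posLog = fun y => 2⁻¹ * (log y + |log y|) :=
    funext fun _ => half_mul_log_add_log_abs.symm
  rw [hhalf]
  exact ((differentiableAt_log hx).add ((differentiableAt_log hx).abs hlog)).const_mul _

theorem not_differentiableAt_posLog_one : ¬ DifferentiableAt ℝ posLog 1 := fun h => by
  have habs : (fun u => 2 * posLog (exp u) - u) = abs := by
    funext u
    rw [← half_mul_log_add_log_abs, log_exp]
    ring
  have hexp : DifferentiableAt ℝ posLog (exp 0) := by rwa [exp_zero]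
  refine not_differentiableAt_abs_zero (habs ▸ ?_)
  exact ((hexp.comp 0 differentiableAt_exp).const_mul 2).sub differentiableAt_id

/-- The function `φ_s(x) = √x · ln⁺(s / x)`; its products integrate over `(0, ∞)` to
`K(s, t) + (s² / 4) (1 + ln (t / s))`. The factor `√x` carries the weight `x dx`, so that the
ambient Hilbert space is plain `L²(0, ∞)`. -/
def logRamp (s x : ℝ) : ℝ := √x * posLog (s / x)

theorem logRamp_of_le (hx : 0 < x) (hxs : x ≤ s) : logRamp s x = √x * (log s - log x) := by
  have hone : 1 ≤ s / x := (one_le_div hx).2 hxs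
  rw [logRamp, posLog_eq_log (hone.trans (le_abs_self _)), log_div (hx.trans_le hxs).ne' hx.ne']

theorem logRamp_of_ge (hs : 0 < s) (hsx : s ≤ x) : logRamp s x = 0 := by
  have hx : 0 < x := hs.trans_le hsx
  have hposLog : posLog (s / x) = 0 := by
    rw [posLog_eq_zero_iff, abs_of_pos (div_pos hs hx)]
    exact (div_le_one hx).2 hsx
  rw [logRamp, hposLog, mul_zero]

theorem continuousOn_logRamp (s : ℝ) : ContinuousOn (logRamp s) (Ioi 0) :=
  continuous_sqrt.continuousOn.mul <| continuous_posLog.comp_continuousOn <|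
    continuousOn_const.div continuousOn_id fun _ hx => (mem_Ioi.1 hx).ne'

theorem differentiableAt_logRamp (hs : 0 < s) (hx : 0 < x) (hsx : s ≠ x) :
    DifferentiableAt ℝ (logRamp s) x := by
  have hlog : log (s / x) ≠ 0 :=
    log_ne_zero_of_pos_of_ne_one (div_pos hs hx) (by rwa [ne_eq, div_eq_one_iff_eq hx.ne'])
  have hdiv : DifferentiableAt ℝ (fun y => s / y) x :=
    (differentiableAt_const s).div differentiableAt_id hx.ne'
  exact (differentiableAt_id.sqrt hx.ne').mul
    ((differentiableAt_posLog (div_pos hs hx).ne' hlog).comp x hdiv)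

theorem not_differentiableAt_logRamp_self (hs : 0 < s) : ¬ DifferentiableAt ℝ (logRamp s) s := by
  intro h
  have hposLog : posLog =ᶠ[nhds 1] fun y => logRamp s (s / y) / √(s / y) := by
    filter_upwards [Ioi_mem_nhds one_pos] with y hy
    have hsy : 0 < s / y := div_pos hs hy
    rw [logRamp, mul_div_cancel_left₀ _ (sqrt_pos.2 hsy).ne', div_div_cancel₀ hs.ne']
  have hdiv : DifferentiableAt ℝ (fun y => s / y) 1 :=
    (differentiableAt_const s).div differentiableAt_id one_ne_zero
  have hramp : DifferentiableAt ℝ (logRamp s) (s / 1) := by rwa [div_one]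
  have hs1 : 0 < s / 1 := by rwa [div_one]
  exact not_differentiableAt_posLog_one <| DifferentiableAt.congr_of_eventuallyEq
    ((hramp.comp 1 hdiv).div (hdiv.sqrt hs1.ne') (sqrt_pos.2 hs1).ne') hposLog

theorem linearIndependent_domRestrict_logRamp :
    LinearIndependent ℝ fun s : Ioi (0 : ℝ) => (Ioi 0).domRestrict (logRamp s) :=
  linearIndependent_domRestrict_of_not_differentiableAt isOpen_Ioi (p := Subtype.val)
    Subtype.property (fun s => not_differentiableAt_logRamp_self s.2)
    fun s t hts => differentiableAt_logRamp t.2 s.2 (Subtype.coe_ne_coe.2 hts)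

/-- A primitive of `x · ln (s / x) · ln (t / x)`, written through `x ln x`, which extends
continuously to `x = 0`. -/
def logRampPrimitive (s t x : ℝ) : ℝ :=
  (x * (log s + 1 / 2) - x * log x) * (x * (log t + 1 / 2) - x * log x) / 2 + x ^ 2 / 8

theorem continuous_logRampPrimitive (s t : ℝ) : Continuous (logRampPrimitive s t) := by
  have hfactor (u : ℝ) : Continuous fun x => x * (log u + 1 / 2) - x * log x :=
    (continuous_mul_const _).sub continuous_mul_log
  exact (((hfactor s).mul (hfactor t)).div_const 2).add ((continuous_pow 2).div_const 8)

theorem hasDerivAt_logRampPrimitive (hx : 0 < x) (hxs : x ≤ s) (hxt : x ≤ t) :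
    HasDerivAt (logRampPrimitive s t) (logRamp s x * logRamp t x) x := by
  have hfactor (u : ℝ) :
      HasDerivAt (fun y => y * (log u + 1 / 2) - y * log y) (log u - log x - 1 / 2) x :=
    (((hasDerivAt_id x).mul_const _).sub (hasDerivAt_mul_log hx.ne')).congr_deriv (by ring)
  refine ((((hfactor s).mul (hfactor t)).div_const 2).add
    ((hasDerivAt_pow 2 x).div_const 8)).congr_deriv ?_
  rw [logRamp_of_le hx hxs, logRamp_of_le hx hxt, mul_mul_mul_comm, mul_self_sqrt hx.le]
  push_cast
  ring

theorem integrableOn_Ioc_logRamp_mul (hst : s ≤ t) :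
    IntegrableOn (fun x => logRamp s x * logRamp t x) (Ioc 0 s) := by
  refine intervalIntegral.integrableOn_deriv_of_nonneg
    (continuous_logRampPrimitive s t).continuousOn
    (fun x hx => hasDerivAt_logRampPrimitive hx.1 hx.2.le (hx.2.le.trans hst)) fun x _ => ?_
  exact mul_nonneg (mul_nonneg (sqrt_nonneg _) posLog_nonneg)
    (mul_nonneg (sqrt_nonneg _) posLog_nonneg)

theorem integral_logRamp_mul_of_le (hs : 0 < s) (hst : s ≤ t) :
    ∫ x in Ioi 0, logRamp s x * logRamp t x = s ^ 2 / 4 * (1 + log (t / s)) := by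
  have hsupp : ∫ x in Ioi 0, logRamp s x * logRamp t x =
      ∫ x in 0..s, logRamp s x * logRamp t x := by
    rw [intervalIntegral.integral_of_le hs.le]
    refine setIntegral_eq_of_subset_of_forall_sdiff_eq_zero measurableSet_Ioi
      Ioc_subset_Ioi_self fun x hx => ?_
    rw [logRamp_of_ge hs (not_le.1 fun hxs => hx.2 ⟨hx.1, hxs⟩).le, zero_mul]
  rw [hsupp, intervalIntegral.integral_eq_sub_of_hasDerivAt_of_le hs.le
    (continuous_logRampPrimitive s t).continuousOn
    (fun x hx => hasDerivAt_logRampPrimitive hx.1 hx.2.le (hx.2.le.trans hst))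
    ((intervalIntegrable_iff_integrableOn_Ioc_of_le hs.le).2 (integrableOn_Ioc_logRamp_mul hst)),
    log_div (hs.trans_le hst).ne' hs.ne', logRampPrimitive, logRampPrimitive]
  ring

theorem memLp_logRamp (hs : 0 < s) : MemLp (logRamp s) 2 (volume.restrict (Ioi 0)) := by
  refine (memLp_two_iff_integrable_sq
    ((continuousOn_logRamp s).aestronglyMeasurable measurableSet_Ioi)).2 ?_
  simp only [sq]
  refine (integrableOn_Ioc_logRamp_mul le_rfl).of_forall_sdiff_eq_zero measurableSet_Ioi
    fun x hx => ?_
  rw [logRamp_of_ge hs (not_le.1 fun hxs => hx.2 ⟨hx.1, hxs⟩).le, zero_mul]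

/-- The function `φ_s = logRamp s` as a vector of the Hilbert space `L²(0, ∞)`, for `s > 0`. -/
def logRampLp (s : Ioi (0 : ℝ)) : Lp ℝ 2 (volume.restrict (Ioi (0 : ℝ))) :=
  (memLp_logRamp s.2).toLp

theorem linearIndependent_logRampLp : LinearIndependent ℝ logRampLp :=
  linearIndependent_toLp_of_domRestrict isOpen_Ioi (f := fun s : Ioi (0 : ℝ) => logRamp s)
    (fun s => continuousOn_logRamp s) (fun s => memLp_logRamp s.2)
    linearIndependent_domRestrict_logRamp

theorem inner_logRampLp_eq_integral (s t : Ioi (0 : ℝ)) :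
    ⟪logRampLp s, logRampLp t⟫_ℝ = ∫ x in Ioi 0, logRamp s x * logRamp t x := by
  refine (L2.inner_def _ _).trans (integral_congr_ae ?_)
  filter_upwards [(memLp_logRamp s.2).coeFn_toLp, (memLp_logRamp t.2).coeFn_toLp] with x hs ht
  rw [logRampLp, logRampLp, hs, ht, inner_apply]

theorem inner_logRampLp (s t : Ioi (0 : ℝ)) :
    ⟪logRampLp s, logRampLp t⟫_ℝ = Kfun s t + (s : ℝ) ^ 2 / 4 * (1 + log (t / s)) := by
  rw [Kfun]
  split_ifs with hst
  · rw [inner_logRampLp_eq_integral, integral_logRamp_mul_of_le s.2 hst, zero_add]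
  · rw [real_inner_comm, inner_logRampLp_eq_integral,
      integral_logRamp_mul_of_le t.2 (not_le.1 hst).le, log_div s.2.ne' t.2.ne',
      log_div t.2.ne' s.2.ne']
    ring

theorem Hfun_eq_inner_logRampLp (r₁ s t : Ioi (0 : ℝ)) :
    Hfun r₁ s t = ⟪logRampLp s - logRampLp r₁, logRampLp t - logRampLp r₁⟫_ℝ := by
  have hself : Kfun r₁ r₁ = 0 := if_pos le_rfl
  have hlog_div (u v : Ioi (0 : ℝ)) : log (u / v : ℝ) = log u - log v := log_div u.2.ne' v.2.ne'
  simp only [inner_sub_left, inner_sub_right, inner_logRampLp, Hfun, hself, hlog_div]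
  ring

end LogRamp

theorem stmt8_general {ι : Type*} [Finite ι] {r₁ : ℝ} (hr₁ : 0 < r₁) {r : ι → ℝ}
    (hpos : ∀ i, 0 < r i) (hne : ∀ i, r i ≠ r₁) (hinj : Function.Injective r) :
    (Matrix.of fun i j => Hfun r₁ (r i) (r j)).PosDef := by
  let base : Ioi (0 : ℝ) := ⟨r₁, hr₁⟩
  let knot : ι → {s : Ioi (0 : ℝ) // s ≠ base} :=
    fun i => ⟨⟨r i, hpos i⟩, fun h => hne i (congrArg Subtype.val h)⟩
  have hknot : Function.Injective knot := fun _ _ h => hinj (congrArg (fun s => (s.1 : ℝ)) h)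
  have hindep : LinearIndependent ℝ fun i => logRampLp (knot i) - logRampLp base :=
    ((affineIndependent_iff_linearIndependent_vsub ℝ logRampLp base).1
      linearIndependent_logRampLp.affineIndependent).comp knot hknot
  have hgram : (Matrix.of fun i j => Hfun r₁ (r i) (r j)) =
      Matrix.gram ℝ fun i => logRampLp (knot i) - logRampLp base :=
    Matrix.ext fun i j => Hfun_eq_inner_logRampLp base (knot i) (knot j)
  exact hgram ▸ Matrix.posDef_gram_of_linearIndependent hindep

/-- the `(n−1)×(n−1)` matrix with entries `H_{0,∞}(r_k, r_j)`,
`k, j ∈ {2,…,n}`, is invertible. -/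
theorem stmt8 (n : ℕ) (hn : 2 ≤ n) (r : ℕ → ℝ) (hpos : 0 < r 1)
    (hmono : ∀ j, 1 ≤ j → j < n → r j < r (j + 1)) :
    (Matrix.of fun k j : Fin (n - 1) =>
        Hfun (r 1) (r ((k : ℕ) + 2)) (r ((j : ℕ) + 2))).det ≠ 0 := by
  have hr : StrictMonoOn r (Icc 1 n) := strictMonoOn_of_lt_add_one ordConnected_Icc
    fun j _ hj hj' => hmono j hj.1 (Nat.lt_of_succ_le hj'.2)
  have hmem (k : Fin (n - 1)) : (k : ℕ) + 2 ∈ Icc 1 n := ⟨by omega, by omega⟩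
  have hlt (k : Fin (n - 1)) : r 1 < r (k + 2) := hr ⟨le_rfl, by omega⟩ (hmem k) (by omega)
  have hinj : Function.Injective fun k : Fin (n - 1) => r (k + 2) := fun j k hjk =>
    Fin.ext (Nat.add_right_cancel (hr.injOn (hmem j) (hmem k) hjk))
  exact (stmt8_general hpos (fun k => hpos.trans (hlt k)) (fun k => (hlt k).ne') hinj).det_pos.ne'
end
end
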